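/- Let Z^{2²10²}(τ,z) = 2·(η(τ)³η(2τ)η(5τ)/η(10τ))·φ_{−2,1}(τ,z) be the twined elliptic genus for the M₂₄ class 10a. Then for all τ ∈ ℍ and z ∈ ℂ, exp(−20πi z²/(10τ+1)) · Z^{2²10²}( τ/(10τ+1), z/(10τ+1) ) = −Z^{2²10²}(τ,z); that is, the slash of Z^{2²10²} by the matrix M_{1/10} = (1,0;10,1) representing the width-one cusp 1/10 of Γ₀(20) equals −Z^{2²10²}. -/

import Mathlib

open Complex


/-- The Dedekind eta function. -/
noncomputable def Eta (τ : ℂ) : ℂ :=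
  Complex.exp (Real.pi * I * τ / 12) *
    ∏' n : ℕ, (1 - Complex.exp (2 * Real.pi * I * ((n : ℂ) + 1) * τ))

noncomputable def θ₁ (τ z : ℂ) : ℂ :=
  -I * ∑' n : ℤ, (-1 : ℂ) ^ n *
    Complex.exp (Real.pi * I * ((n : ℂ) + 1 / 2) ^ 2 * τ + (2 * (n : ℂ) + 1) * Real.pi * I * z)

noncomputable def θ₂ (τ z : ℂ) : ℂ :=
  ∑' n : ℤ,
    Complex.exp (Real.pi * I * ((n : ℂ) + 1 / 2) ^ 2 * τ + (2 * (n : ℂ) + 1) * Real.pi * I * z)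

noncomputable def θ₃ (τ z : ℂ) : ℂ :=
  ∑' n : ℤ, Complex.exp (Real.pi * I * (n : ℂ) ^ 2 * τ + 2 * (n : ℂ) * Real.pi * I * z)

noncomputable def θ₄ (τ z : ℂ) : ℂ :=
  ∑' n : ℤ, (-1 : ℂ) ^ n *
    Complex.exp (Real.pi * I * (n : ℂ) ^ 2 * τ + 2 * (n : ℂ) * Real.pi * I * z)

/-- The weak Jacobi form φ_{0,1}. -/
noncomputable def φ01 (τ z : ℂ) : ℂ :=
  4 * ((θ₂ τ z / θ₂ τ 0) ^ 2 + (θ₃ τ z / θ₃ τ 0) ^ 2 + (θ₄ τ z / θ₄ τ 0) ^ 2)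

/-- The weak Jacobi form φ_{−2,1}. -/
noncomputable def φm21 (τ z : ℂ) : ℂ := θ₁ τ z ^ 2 / Eta τ ^ 6

/-- Twined elliptic genus for the class 10a (cycle shape 2^2 10^2). -/
noncomputable def Z10a (τ z : ℂ) : ℂ :=
  2 * (Eta τ ^ 3 * Eta (2 * τ) * Eta (5 * τ) / Eta (10 * τ)) * φm21 τ z

/-!
Up to sign `(1, 0; m, 1) = S T⁻ᵐ S`, so the behaviour of `η` and `θ₁` under `S` and `T` determines
their behaviour under it. For `φ_{−2,1}` the multipliers of `θ₁²` and `η⁶` cancel, while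
`η(τ / (mτ + 1)) = e^{−πim/12} √(mτ + 1) η(τ)`. If `k ∣ N`, this formula at `kτ` with `m = N / k`
has the automorphy factor `√(Nτ + 1)`, whatever `k` is. An eta quotient `∏ η(kτ)^{r k}` with
`∑ r k = 4` therefore has weight 2, which compensates the weight −2 of `φ_{−2,1}`, and only the root
of unity `exp(−(πi/12) ∑ r k · N / k)` survives. For the class 10a the sum in the exponent is
`3 · 10 + 5 + 2 − 1 = 36`, and the root of unity is `e^{−3πi} = −1`.
-/

lemma csqrt_sq (w : ℂ) : sqrt w ^ 2 = w :=
  cpow_ofNat_inv_pow w 2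

lemma csqrt_pow_two_mul (w : ℂ) (n : ℕ) : sqrt w ^ (2 * n) = w ^ n := by
  rw [pow_mul, csqrt_sq]

lemma csqrt_ne_zero {w : ℂ} (hw : w ≠ 0) : sqrt w ≠ 0 :=
  ne_zero_pow two_ne_zero ((csqrt_sq w).symm ▸ hw)

lemma clog_neg_of_im_pos {w : ℂ} (hw : 0 < w.im) : log (-w) = log w - Real.pi * I := by
  simp only [log, norm_neg, arg_neg_eq_arg_sub_pi_of_im_pos hw]
  push_cast
  ring

lemma csqrt_mul_csqrt_of_im_pos {u v : ℂ} (hu : 0 < u.im) (hv : 0 < v.im) :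
    sqrt u * sqrt v = I * sqrt (-(u * v)) := by
  have hu0 : u ≠ 0 := UpperHalfPlane.ne_zero ⟨u, hu⟩
  have hv0 : v ≠ 0 := UpperHalfPlane.ne_zero ⟨v, hv⟩
  have harg : arg u + arg (-v) ∈ Set.Ioc (-Real.pi) Real.pi := by
    rw [arg_neg_eq_arg_sub_pi_of_im_pos hv]
    have hu_pos : 0 < arg u := (arg_nonneg_iff.mpr hu.le).lt_of_ne' fun h ↦
      hu.ne' (arg_eq_zero_iff.mp h).2
    constructor <;> linarith [arg_nonneg_iff.mpr hv.le, arg_le_pi u, arg_le_pi v]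
  have hlog : log (-(u * v)) = log u + log v - Real.pi * I := by
    rw [← mul_neg, log_mul hu0 (neg_ne_zero.mpr hv0) harg, clog_neg_of_im_pos hv, add_sub_assoc]
  calc sqrt u * sqrt v
      = exp (Real.pi / 2 * I) * exp (log (-(u * v)) / 2) := by
        rw [sqrt_eq_exp hu0, sqrt_eq_exp hv0, hlog, ← exp_add, ← exp_add]
        ring_nf
    _ = I * sqrt (-(u * v)) := by
        rw [exp_pi_div_two_mul_I, sqrt_eq_exp (neg_ne_zero.mpr (mul_ne_zero hu0 hv0))]

lemma neg_div_div_neg_one_div_sub {τ : ℂ} (hτ : τ ≠ 0) (z c : ℂ) :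
    -z / τ / (-1 / τ - c) = z / (c * τ + 1) := by
  rw [show -1 / τ - c = -(c * τ + 1) / τ by field_simp; ring, div_div_div_cancel_right₀ hτ,
    neg_div_neg_eq]

lemma neg_one_div_neg_one_div_sub {τ : ℂ} (hτ : τ ≠ 0) (c : ℂ) :
    -1 / (-1 / τ - c) = τ / (c * τ + 1) := by
  rw [← neg_div_div_neg_one_div_sub hτ, neg_div_self hτ]

lemma neg_one_div_sub_mul_self {τ : ℂ} (hτ : τ ≠ 0) (c : ℂ) :
    (-1 / τ - c) * τ = -(c * τ + 1) := by
  field_simp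
  ring

lemma im_neg_one_div_sub_intCast_pos {τ : ℂ} (hτ : 0 < τ.im) (m : ℤ) : 0 < (-1 / τ - m).im := by
  simpa [neg_div, inv_neg] using UpperHalfPlane.im_inv_neg_coe_pos ⟨τ, hτ⟩

lemma intCast_mul_add_one_ne_zero {τ : ℂ} (hτ : 0 < τ.im) (m : ℤ) : (m * τ + 1 : ℂ) ≠ 0 := by
  have hτ0 : τ ≠ 0 := UpperHalfPlane.ne_zero ⟨τ, hτ⟩
  have hu : -1 / τ - m ≠ 0 := UpperHalfPlane.ne_zero ⟨_, im_neg_one_div_sub_intCast_pos hτ m⟩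
  rw [← neg_ne_zero, ← neg_one_div_sub_mul_self hτ0]
  exact mul_ne_zero hu hτ0

lemma Eta_eq_eta (τ : ℂ) : Eta τ = ModularForm.eta τ := by
  simp only [Eta, ModularForm.eta, ModularForm.eta_q_eq_cexp, Function.Periodic.qParam]
  congr 2
  push_cast
  ring

lemma Eta_add_intCast (τ : ℂ) (m : ℤ) : Eta (τ + m) = exp (Real.pi * I * m / 12) * Eta τ := by
  have hexp (n : ℕ) : exp (2 * Real.pi * I * (n + 1) * (τ + m)) =
      exp (2 * Real.pi * I * (n + 1) * τ) :=
    exp_eq_exp_iff_exists_int.mpr ⟨(n + 1) * m, by push_cast; ring⟩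
  simp only [Eta, hexp]
  rw [← mul_assoc, ← exp_add]
  ring_nf

lemma Eta_neg_one_div {τ : ℂ} (hτ : 0 < τ.im) :
    Eta (-1 / τ) = (sqrt I)⁻¹ * (sqrt τ * Eta τ) := by
  simpa [Eta_eq_eta] using ModularForm.eta_comp_eq_csqrt_I_inv hτ

lemma Eta_div_mul_add_one {τ : ℂ} (hτ : 0 < τ.im) (m : ℤ) :
    Eta (τ / (m * τ + 1)) =
      exp (-(Real.pi * I * m / 12)) * sqrt (m * τ + 1) * Eta τ := by
  have hτ0 : τ ≠ 0 := UpperHalfPlane.ne_zero ⟨τ, hτ⟩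
  have hu := im_neg_one_div_sub_intCast_pos hτ m
  have hI : (sqrt I)⁻¹ * (sqrt I)⁻¹ = -I := by rw [← mul_inv, ← sq, csqrt_sq, inv_I]
  have hsqrt : sqrt (-1 / τ - m) * sqrt τ = I * sqrt (m * τ + 1) := by
    rw [csqrt_mul_csqrt_of_im_pos hu hτ, neg_one_div_sub_mul_self hτ0, neg_neg]
  have hT : Eta (-1 / τ - m) = exp (-(Real.pi * I * m / 12)) * Eta (-1 / τ) := by
    simpa [sub_eq_add_neg, neg_div] using Eta_add_intCast (-1 / τ) (-m)
  set phase := exp (-(Real.pi * I * m / 12))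
  calc Eta (τ / (m * τ + 1))
      = Eta (-1 / (-1 / τ - m)) := by rw [neg_one_div_neg_one_div_sub hτ0]
    _ = (sqrt I)⁻¹ * (sqrt I)⁻¹ * phase * (sqrt (-1 / τ - m) * sqrt τ) * Eta τ := by
      rw [Eta_neg_one_div hu, hT, Eta_neg_one_div hτ]
      ring
    _ = -(I * I) * phase * sqrt (m * τ + 1) * Eta τ := by
      rw [hI, hsqrt]
      ring
    _ = phase * sqrt (m * τ + 1) * Eta τ := by
      rw [I_mul_I, neg_neg, one_mul]

lemma θ₁_eq_jacobiTheta₂ (τ z : ℂ) :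
    θ₁ τ z = -I * (exp (Real.pi * I * (τ / 4 + z)) * jacobiTheta₂ (z + τ / 2 + 1 / 2) τ) := by
  rw [θ₁, jacobiTheta₂, ← tsum_mul_left (a := exp _)]
  congr 1
  refine tsum_congr fun n ↦ ?_
  rw [jacobiTheta₂_term, ← exp_pi_mul_I, ← exp_int_mul, ← exp_add, ← exp_add]
  ring_nf

lemma θ₁_neg (τ z : ℂ) : θ₁ τ (-z) = -θ₁ τ z := by
  rw [θ₁, θ₁, ← mul_neg, ← tsum_neg, ← (Equiv.subLeft (-1 : ℤ)).tsum_eq]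
  congr 1
  refine tsum_congr fun n ↦ ?_
  have hsign : (-1 : ℂ) ^ (-1 - n) = -(-1) ^ n := by
    rw [zpow_sub₀ (by norm_num), zpow_neg_one, inv_neg_one, neg_div, one_div, ← inv_zpow,
      inv_neg_one]
  rw [Equiv.subLeft_apply, hsign]
  push_cast
  ring_nf

lemma θ₁_add_intCast (τ z : ℂ) (m : ℤ) :
    θ₁ (τ + m) z = exp (Real.pi * I * m / 4) * θ₁ τ z := by
  rw [θ₁, θ₁, mul_left_comm, ← tsum_mul_left (a := exp _)]
  congr 1
  refine tsum_congr fun n ↦ ?_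
  rw [mul_left_comm, ← exp_add]
  congr 1
  -- `(n + 1/2)² = n (n + 1) + 1/4`, and `n (n + 1)` is even.
  obtain ⟨k, hk⟩ := Int.even_mul_succ_self n
  have hk' : (n : ℂ) * (n + 1) = k + k := by exact_mod_cast hk
  refine exp_eq_exp_iff_exists_int.mpr ⟨k * m, ?_⟩
  push_cast
  linear_combination (Real.pi * I * m : ℂ) * hk'

lemma θ₁_neg_one_div {τ : ℂ} (hτ : τ ≠ 0) (z : ℂ) :
    θ₁ (-1 / τ) (z / τ) =
      -I * (-I * τ) ^ (1 / 2 : ℂ) * exp (Real.pi * I * z ^ 2 / τ) * θ₁ τ z := by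
  have hcpow : (-I * τ) ^ (1 / 2 : ℂ) ≠ 0 := by simp [cpow_eq_zero_iff, hτ]
  have hperiod : jacobiTheta₂ (z + τ / 2 + 1 / 2) τ = jacobiTheta₂ (z + τ / 2 - 1 / 2) τ := by
    rw [← jacobiTheta₂_add_left (z + τ / 2 - 1 / 2)]
    ring_nf
  have harg : (z + τ / 2 - 1 / 2) / τ = z / τ + -1 / τ / 2 + 1 / 2 := by
    field_simp
    ring
  have hexp : exp (Real.pi * I * (-1 / τ / 4 + z / τ)) =
      -I * (exp (Real.pi * I * z ^ 2 / τ) * exp (Real.pi * I * (τ / 4 + z)) *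
        exp (-Real.pi * I * (z + τ / 2 - 1 / 2) ^ 2 / τ)) := by
    rw [← exp_neg_pi_div_two_mul_I, ← exp_add, ← exp_add, ← exp_add]
    congr 1
    field_simp
    ring
  rw [θ₁_eq_jacobiTheta₂, θ₁_eq_jacobiTheta₂, hperiod,
    jacobiTheta₂_functional_equation (z + τ / 2 - 1 / 2), harg, hexp]
  field_simp [hcpow]

lemma φm21_neg (τ z : ℂ) : φm21 τ (-z) = φm21 τ z := by
  rw [φm21, φm21, θ₁_neg, neg_sq]

lemma φm21_add_intCast (τ z : ℂ) (m : ℤ) : φm21 (τ + m) z = φm21 τ z := by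
  have hphase : exp (Real.pi * I * m / 4) ^ 2 = exp (Real.pi * I * m / 12) ^ 6 := by
    rw [← exp_nat_mul, ← exp_nat_mul]
    ring_nf
  rw [φm21, φm21, θ₁_add_intCast, Eta_add_intCast, mul_pow, mul_pow, hphase,
    mul_div_mul_left _ _ (pow_ne_zero 6 (exp_ne_zero _))]

lemma φm21_neg_one_div {τ : ℂ} (hτ : 0 < τ.im) (z : ℂ) :
    φm21 (-1 / τ) (z / τ) = exp (2 * Real.pi * I * z ^ 2 / τ) / τ ^ 2 * φm21 τ z := by
  have hτ0 : τ ≠ 0 := UpperHalfPlane.ne_zero ⟨τ, hτ⟩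
  have hθ : θ₁ (-1 / τ) (z / τ) ^ 2 = I * τ * exp (2 * Real.pi * I * z ^ 2 / τ) * θ₁ τ z ^ 2 := by
    have hcpow : ((-I * τ) ^ (1 / 2 : ℂ)) ^ 2 = -I * τ := by
      rw [one_div, cpow_ofNat_inv_pow]
    have hexp : exp (Real.pi * I * z ^ 2 / τ) ^ 2 = exp (2 * Real.pi * I * z ^ 2 / τ) := by
      rw [← exp_nat_mul]
      ring_nf
    rw [θ₁_neg_one_div hτ0, mul_pow, mul_pow, mul_pow, hcpow, hexp, neg_sq, I_sq]
    ring
  have hη : Eta (-1 / τ) ^ 6 = I * τ ^ 3 * Eta τ ^ 6 := by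
    have hsqrt (w : ℂ) : sqrt w ^ 6 = w ^ 3 := csqrt_pow_two_mul w 3
    rw [Eta_neg_one_div hτ, mul_pow, mul_pow, inv_pow, hsqrt, hsqrt, I_pow_three, inv_neg, inv_I,
      neg_neg, mul_assoc]
  rw [φm21, φm21, hθ, hη]
  field_simp

lemma φm21_div_mul_add_one {τ : ℂ} (hτ : 0 < τ.im) (z : ℂ) (m : ℤ) :
    φm21 (τ / (m * τ + 1)) (z / (m * τ + 1)) =
      exp (2 * Real.pi * I * m * z ^ 2 / (m * τ + 1)) / (m * τ + 1) ^ 2 * φm21 τ z := by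
  have hτ0 : τ ≠ 0 := UpperHalfPlane.ne_zero ⟨τ, hτ⟩
  have hw : τ * m + 1 ≠ 0 := mul_comm (m : ℂ) τ ▸ intCast_mul_add_one_ne_zero hτ m
  have hu := im_neg_one_div_sub_intCast_pos hτ m
  have huτ : -1 / τ - m = -(m * τ + 1) / τ := by
    rw [← neg_one_div_sub_mul_self hτ0, mul_div_cancel_right₀ _ hτ0]
  have hT : φm21 (-1 / τ - m) (-z / τ) = φm21 (-1 / τ) (-z / τ) := by
    simpa [sub_eq_add_neg] using φm21_add_intCast (-1 / τ) (-z / τ) (-m)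
  have hexp : exp (2 * Real.pi * I * (-z / τ) ^ 2 / (-1 / τ - m)) *
      exp (2 * Real.pi * I * (-z) ^ 2 / τ) = exp (2 * Real.pi * I * m * z ^ 2 / (m * τ + 1)) := by
    rw [← exp_add, huτ]
    congr 1
    field_simp
    ring
  have hfactor : (-1 / τ - m) ^ 2 * τ ^ 2 = (m * τ + 1) ^ 2 := by
    rw [← mul_pow, neg_one_div_sub_mul_self hτ0, neg_sq]
  rw [← neg_one_div_neg_one_div_sub hτ0, ← neg_div_div_neg_one_div_sub hτ0, φm21_neg_one_div hu, hT,
    φm21_neg_one_div hτ, φm21_neg, ← mul_assoc, div_mul_div_comm, hexp, hfactor]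

lemma prod_zpow_eq_zpow_sum₀ {ι G₀ : Type*} [CommGroupWithZero G₀] {a : G₀} (ha : a ≠ 0)
    (s : Finset ι) (f : ι → ℤ) : ∏ i ∈ s, a ^ f i = a ^ ∑ i ∈ s, f i := by
  classical
  induction s using Finset.induction_on with
  | empty => simp
  | insert i s hi ih => rw [Finset.prod_insert hi, Finset.sum_insert hi, zpow_add₀ ha, ih]

/-- The eta quotient `∏_{k ∣ N} η(kτ)^{r k}` of level `N` with exponents `r`. Only the values of `r`
at divisors of `N` matter. -/
noncomputable def etaQuotient (N : ℕ) (r : ℕ → ℤ) (τ : ℂ) : ℂ :=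
  ∏ k ∈ N.divisors, Eta (k * τ) ^ r k

lemma Eta_natCast_mul_div_mul_add_one {τ : ℂ} (hτ : 0 < τ.im) {k N : ℕ} (hk : k ∈ N.divisors) :
    Eta (k * (τ / (N * τ + 1))) =
      exp (-(Real.pi * I * (N / k : ℕ) / 12)) * sqrt (N * τ + 1) * Eta (k * τ) := by
  have hk_pos : 0 < k := Nat.pos_of_mem_divisors hk
  obtain ⟨m, rfl⟩ := Nat.dvd_of_mem_divisors hk
  have hkτ : 0 < (k * τ).im := by simpa using mul_pos (Nat.cast_pos.mpr hk_pos) hτ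
  have hw : ((k * m : ℕ) : ℂ) * τ + 1 = (m : ℤ) * (k * τ) + 1 := by
    push_cast
    ring
  rw [hw, Nat.mul_div_cancel_left m hk_pos, ← mul_div_assoc, Eta_div_mul_add_one hkτ,
    Int.cast_natCast]

theorem etaQuotient_div_mul_add_one {τ : ℂ} (hτ : 0 < τ.im) (N : ℕ) (r : ℕ → ℤ) :
    etaQuotient N r (τ / (N * τ + 1)) =
      exp (-(Real.pi * I / 12 * (∑ k ∈ N.divisors, r k * (N / k : ℕ) : ℤ))) *
        sqrt (N * τ + 1) ^ (∑ k ∈ N.divisors, r k) * etaQuotient N r τ := by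
  have hw : (N * τ + 1 : ℂ) ≠ 0 := by exact_mod_cast intCast_mul_add_one_ne_zero hτ N
  have hphase : exp (-(Real.pi * I / 12 * (∑ k ∈ N.divisors, r k * (N / k : ℕ) : ℤ))) =
      ∏ k ∈ N.divisors, exp (-(Real.pi * I * (N / k : ℕ) / 12)) ^ r k := by
    rw [Int.cast_sum, Finset.mul_sum, ← Finset.sum_neg_distrib, exp_sum]
    refine Finset.prod_congr rfl fun k _ ↦ ?_
    rw [← exp_int_mul, Int.cast_mul, Int.cast_natCast]
    ring_nf
  rw [hphase, ← prod_zpow_eq_zpow_sum₀ (csqrt_ne_zero hw), etaQuotient, etaQuotient,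
    ← Finset.prod_mul_distrib, ← Finset.prod_mul_distrib]
  refine Finset.prod_congr rfl fun k hk ↦ ?_
  rw [Eta_natCast_mul_div_mul_add_one hτ hk, mul_zpow, mul_zpow]

theorem etaQuotient_mul_φm21_slash {N : ℕ} {r : ℕ → ℤ} (hr : ∑ k ∈ N.divisors, r k = 4)
    {τ : ℂ} (hτ : 0 < τ.im) (z : ℂ) :
    exp (-(2 * Real.pi * I * N * z ^ 2 / (N * τ + 1))) *
        (etaQuotient N r (τ / (N * τ + 1)) * φm21 (τ / (N * τ + 1)) (z / (N * τ + 1))) =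
      exp (-(Real.pi * I / 12 * (∑ k ∈ N.divisors, r k * (N / k : ℕ) : ℤ))) *
        (etaQuotient N r τ * φm21 τ z) := by
  have hw : (N * τ + 1 : ℂ) ≠ 0 := by exact_mod_cast intCast_mul_add_one_ne_zero hτ N
  have hφ := φm21_div_mul_add_one hτ z N
  have hsqrt : sqrt (N * τ + 1) ^ (4 : ℤ) = (N * τ + 1) ^ 2 :=
    csqrt_pow_two_mul _ 2
  rw [Int.cast_natCast] at hφ
  rw [etaQuotient_div_mul_add_one hτ, hr, hφ, hsqrt, exp_neg (2 * Real.pi * I * N * z ^ 2 / _)]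
  field_simp

/-- The exponents of the eta quotient `η(τ)³η(2τ)η(5τ)/η(10τ)` in the twined elliptic genus of the
class 10a. -/
def etaExponents10a : ℕ → ℤ
  | 1 => 3
  | 2 => 1
  | 5 => 1
  | 10 => -1
  | _ => 0

lemma Z10a_eq_etaQuotient_mul_φm21 (τ z : ℂ) :
    Z10a τ z = 2 * (etaQuotient 10 etaExponents10a τ * φm21 τ z) := by
  have hdivisors : Nat.divisors 10 = {1, 2, 5, 10} := rfl
  simp only [Z10a, etaQuotient, hdivisors, etaExponents10a, Finset.mem_insert,
    OfNat.one_ne_ofNat, Finset.mem_singleton, or_self, not_false_eq_true, Finset.prod_insert,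
    Nat.cast_one, one_mul, zpow_ofNat, Nat.reduceEqDiff, Nat.cast_ofNat, pow_one,
    Finset.prod_singleton, zpow_neg]
  ring

/-- The slash of Z^{2²10²} by M_{1/10} = (1,0;10,1) equals −Z^{2²10²}. -/
theorem Z10a_slash_M_tenth (τ : ℂ) (hτ : 0 < τ.im) (z : ℂ) :
    Complex.exp (-20 * Real.pi * I * z ^ 2 / (10 * τ + 1)) *
        Z10a (τ / (10 * τ + 1)) (z / (10 * τ + 1)) =
      -Z10a τ z := by
  have hweight : ∑ k ∈ Nat.divisors 10, etaExponents10a k = 4 := rfl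
  have hindex : ∑ k ∈ Nat.divisors 10, etaExponents10a k * (10 / k : ℕ) = 36 := rfl
  have hphase : exp (-(Real.pi * I / 12 * (36 : ℤ))) = -1 := by
    rw [← exp_pi_mul_I, exp_eq_exp_iff_exists_int]
    exact ⟨-2, by push_cast; ring⟩
  have harg : -20 * Real.pi * I * z ^ 2 / (10 * τ + 1) =
      -(2 * Real.pi * I * 10 * z ^ 2 / (10 * τ + 1)) := by ring
  have hslash := etaQuotient_mul_φm21_slash hweight hτ z
  rw [hindex, hphase, Nat.cast_ofNat] at hslash
  rw [Z10a_eq_etaQuotient_mul_φm21, Z10a_eq_etaQuotient_mul_φm21, mul_left_comm, harg, hslash]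
  ring
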